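/- Let H be a distribution function with upper endpoint r_H = ∞ and suppose H ∈ MDA(Λ, w), i.e. there is a positive measurable function w with lim_{x→∞} H̄(x + t/w(x))/H̄(x) = e^{−t} for every t ∈ ℝ. Then for every constant μ ≥ 0 and every c > 1, lim_{x→∞} (x·w(x))^μ · H̄(cx)/H̄(x) = 0. -/

import Mathlib

open MeasureTheory ProbabilityTheory Real Filter Set Topology

noncomputable section

/-!
Put `G = 1 - H`. The increment `1 / w x` multiplies `G x` by about `e⁻¹`, and monotonicity of `G`
forces `w` to be self-neglecting, so that `k` successive increments starting at `x` have lengths at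
most `1 / w x, q / w x, …, q ^ (k - 1) / w x` for any fixed `q > 1`. They stay within
`[x, c x]` as long as `q ^ k` is at most a constant times `x w x`, and multiply `G` by at most
`e^(-k/2)`. Taking `q` close to `1` turns this into decay of `G (c x) / G x` faster than any power
of `x w x`, which tends to infinity.
-/

open Asymptotics

lemma apply_add_mul_geom_sum_le {R : Type*} [CommRing R] [PartialOrder R] [IsOrderedRing R]
    {G a : R → R} {q r X : R} (hG : Antitone G) (ha : ∀ x, 0 ≤ a x) (hq : 0 ≤ q) (hr : 0 ≤ r)
    (hGa : ∀ x, X ≤ x → G (x + a x) ≤ r * G x)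
    (haa : ∀ x, X ≤ x → a (x + a x) ≤ q * a x) (n : ℕ) {x : R} (hx : X ≤ x) :
    G (x + a x * ∑ i ∈ Finset.range n, q ^ i) ≤ r ^ n * G x := by
  induction n generalizing x with
  | zero => simp
  | succ n ih =>
    have hsum : 0 ≤ ∑ i ∈ Finset.range n, q ^ i := Finset.sum_nonneg fun i _ ↦ pow_nonneg hq i
    have hstep : x + a x + a (x + a x) * ∑ i ∈ Finset.range n, q ^ i ≤
        x + a x * ∑ i ∈ Finset.range (n + 1), q ^ i :=
      calc x + a x + a (x + a x) * ∑ i ∈ Finset.range n, q ^ i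
          ≤ x + a x + q * a x * ∑ i ∈ Finset.range n, q ^ i :=
            add_le_add_right (mul_le_mul_of_nonneg_right (haa x hx) hsum) _
        _ = x + a x * ∑ i ∈ Finset.range (n + 1), q ^ i := by rw [geom_sum_succ]; ring
    calc G (x + a x * ∑ i ∈ Finset.range (n + 1), q ^ i)
        ≤ G (x + a x + a (x + a x) * ∑ i ∈ Finset.range n, q ^ i) := hG hstep
      _ ≤ r ^ n * G (x + a x) := ih (hx.trans (le_add_of_nonneg_right (ha x)))
      _ ≤ r ^ n * (r * G x) := by gcongr; exact hGa x hx
      _ = r ^ (n + 1) * G x := by ring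

lemma geom_sum_le_of_pow_le {R : Type*} [CommRing R] [LinearOrder R] [IsStrictOrderedRing R]
    {q v : R} {n : ℕ} (hq : 1 < q) (h : q ^ n ≤ v * (q - 1)) :
    ∑ i ∈ Finset.range n, q ^ i ≤ v := by
  refine le_of_mul_le_mul_right ?_ (sub_pos.2 hq)
  rw [geom_sum_mul]
  linarith

lemma exists_pow_le_and_rpow_neg_pow_le {q p v : ℝ} (hq : 1 < q) (hp : 0 ≤ p) (hv : 1 ≤ v) :
    ∃ n : ℕ, q ^ n ≤ v ∧ (q ^ (-p)) ^ n ≤ q ^ p * v ^ (-p) := by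
  obtain ⟨n, hnv, hvn⟩ := exists_nat_pow_near hv hq
  have hq₀ : 0 < q := by linarith
  refine ⟨n, hnv, ?_⟩
  calc (q ^ (-p)) ^ n = q ^ p * (q ^ (n + 1)) ^ (-p) := by
        rw [← rpow_natCast, ← rpow_natCast, ← rpow_mul hq₀.le, ← rpow_mul hq₀.le, ← rpow_add hq₀]
        congr 1
        push_cast
        ring
    _ ≤ q ^ p * v ^ (-p) :=
        mul_le_mul_of_nonneg_left
          (rpow_le_rpow_of_nonpos (zero_lt_one.trans_le hv) hvn.le (neg_nonpos.2 hp))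
          (rpow_nonneg hq₀.le p)

/-- `IsGumbelTail G w` says that `G` behaves like the survivor function of a law with upper
endpoint `∞` in the Gumbel max-domain of attraction with scaling function `w`. It plays the role of
`H̄`, but is an arbitrary positive antitone function rather than one minus a distribution
function. -/
structure IsGumbelTail (G w : ℝ → ℝ) : Prop where
  antitone : Antitone G
  pos : ∀ x, 0 < G x
  scale_pos : ∀ x, 0 < w x
  tendsto_div : ∀ t, Tendsto (fun x ↦ G (x + t / w x) / G x) atTop (𝓝 (exp (-t)))

namespace IsGumbelTail

variable {G w : ℝ → ℝ}

lemma eventually_apply_add_div_le (h : IsGumbelTail G w) {t r : ℝ} (hr : exp (-t) < r) :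
    ∀ᶠ x in atTop, G (x + t / w x) ≤ r * G x := by
  filter_upwards [(h.tendsto_div t).eventually_le_const hr] with x hx
  rwa [div_le_iff₀ (h.pos x)] at hx

lemma tendsto_zero (h : IsGumbelTail G w) : Tendsto G atTop (𝓝 0) := by
  have hbdd : BddBelow (range G) := ⟨0, forall_mem_range.2 fun x ↦ (h.pos x).le⟩
  have hlim := tendsto_atTop_ciInf h.antitone hbdd
  set L := ⨅ x, G x
  have hL₀ : 0 ≤ L := le_ciInf fun x ↦ (h.pos x).le
  have hL : L ≤ exp (-(1 / 2)) * L := by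
    refine ge_of_tendsto (hlim.const_mul _) ?_
    filter_upwards [h.eventually_apply_add_div_le (t := 1) (r := exp (-(1 / 2)))
      (by gcongr; norm_num)] with x hx
    exact (ciInf_le hbdd _).trans hx
  have hexp : exp (-(1 / 2)) < 1 := by simp
  rwa [show L = 0 by nlinarith] at hlim

lemma tendsto_mul_scale_atTop (h : IsGumbelTail G w) :
    Tendsto (fun x ↦ x * w x) atTop atTop := by
  refine tendsto_atTop.2 fun b ↦ ?_
  have hsmall : ∀ᶠ x in atTop, (exp b + 1) * G x < G 0 :=
    (h.tendsto_zero.const_mul (exp b + 1)).eventually_lt_const (by simpa using h.pos 0)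
  filter_upwards [hsmall, h.eventually_apply_add_div_le (t := -b) (r := exp b + 1) (by simp)]
    with x hx₀ hxb
  by_contra! hlt
  have hle : x + -b / w x ≤ 0 := by
    have : x < b / w x := (lt_div_iff₀ (h.scale_pos x)).2 hlt
    rw [neg_div]
    linarith
  linarith [h.antitone hle]

lemma tendsto_add_div_scale_atTop (h : IsGumbelTail G w) (s : ℝ) :
    Tendsto (fun x ↦ x + s / w x) atTop atTop := by
  have hfactor : Tendsto (fun x ↦ 1 + s * (x * w x)⁻¹) atTop (𝓝 1) := by
    simpa using (h.tendsto_mul_scale_atTop.inv_tendsto_atTop.const_mul s).const_add 1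
  refine (tendsto_id.atTop_mul_pos one_pos hfactor).congr' ?_
  filter_upwards [eventually_ne_atTop 0] with x hx
  have := (h.scale_pos x).ne'
  simp only [id]
  field_simp

lemma tendsto_div_two_steps (h : IsGumbelTail G w) (s t : ℝ) :
    Tendsto (fun x ↦ G (x + s / w x + t / w (x + s / w x)) / G x) atTop
      (𝓝 (exp (-(s + t)))) := by
  rw [show exp (-(s + t)) = exp (-t) * exp (-s) by rw [← exp_add]; ring_nf]
  refine (((h.tendsto_div t).comp (h.tendsto_add_div_scale_atTop s)).mul
    (h.tendsto_div s)).congr fun x ↦ ?_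
  exact div_mul_div_cancel₀ (h.pos _).ne'

/-- If `w y / w x ≤ b < 1` at `y = x + s / w x`, then `y + b / w y ≥ x + (s + 1) / w x`, although
the values of `G / G x` at these points are close to `exp (-(s + b)) > exp (-(s + 1))`. The case
`b > 1` is symmetric. -/
lemma tendsto_scale_ratio (h : IsGumbelTail G w) (s : ℝ) :
    Tendsto (fun x ↦ w (x + s / w x) / w x) atTop (𝓝 1) := by
  have hcompare (b : ℝ) := h.tendsto_div_two_steps s b
  have hone := h.tendsto_div (s + 1)
  refine tendsto_order.2 ⟨fun b hb ↦ ?_, fun b hb ↦ ?_⟩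
  · filter_upwards [hone.eventually_lt (hcompare b) (by gcongr)] with x hx
    rw [div_lt_div_iff_of_pos_right (h.pos x)] at hx
    have hlt := h.antitone.reflect_lt hx
    rw [add_div, ← add_assoc, add_lt_add_iff_left,
      div_lt_div_iff₀ (h.scale_pos _) (h.scale_pos _)] at hlt
    rw [lt_div_iff₀ (h.scale_pos x)]
    linarith
  · filter_upwards [(hcompare b).eventually_lt hone (by gcongr)] with x hx
    rw [div_lt_div_iff_of_pos_right (h.pos x)] at hx
    have hlt := h.antitone.reflect_lt hx
    rw [add_div, ← add_assoc, add_lt_add_iff_left,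
      div_lt_div_iff₀ (h.scale_pos _) (h.scale_pos _)] at hlt
    rw [div_lt_iff₀ (h.scale_pos x)]
    linarith

lemma eventually_one_div_scale_le (h : IsGumbelTail G w) {q : ℝ} (hq : 1 < q) (s : ℝ) :
    ∀ᶠ x in atTop, 1 / w (x + s / w x) ≤ q * (1 / w x) := by
  filter_upwards [(h.tendsto_scale_ratio s).eventually_const_le (inv_lt_one_of_one_lt₀ hq)]
    with x hx
  have hx' : w x ≤ q * w (x + s / w x) := by
    rwa [le_div_iff₀ (h.scale_pos x), inv_mul_le_iff₀ (by linarith)] at hx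
  rwa [mul_one_div, div_le_div_iff₀ (h.scale_pos _) (h.scale_pos x), one_mul]

lemma eventually_apply_add_mul_geom_sum_le (h : IsGumbelTail G w) {q r : ℝ} (hq : 1 < q)
    (hr : exp (-1) < r) :
    ∀ᶠ x in atTop, ∀ n : ℕ,
      G (x + 1 / w x * ∑ i ∈ Finset.range n, q ^ i) ≤ r ^ n * G x := by
  obtain ⟨X, hX⟩ := eventually_atTop.1
    ((h.eventually_apply_add_div_le hr).and (h.eventually_one_div_scale_le hq 1))
  filter_upwards [eventually_ge_atTop X] with x hx n
  exact apply_add_mul_geom_sum_le (a := fun x ↦ 1 / w x) h.antitone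
    (fun x ↦ (one_div_pos.2 (h.scale_pos x)).le) (by linarith) ((exp_pos _).trans hr).le
    (fun y hy ↦ (hX y hy).1) (fun y hy ↦ (hX y hy).2) n hx

lemma isBigO_apply_mul_div (h : IsGumbelTail G w) {c p : ℝ} (hc : 1 < c) (hp : 0 < p) :
    (fun x ↦ G (c * x) / G x) =O[atTop] fun x ↦ (x * w x) ^ (-p) := by
  -- This `q` makes `q ^ (-p) = exp (-1 / 2)`, which lies strictly between `exp (-1)` and `1`.
  set q := exp (1 / (2 * p)) with hq_def
  have hq : 1 < q := one_lt_exp_iff.2 (by positivity)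
  have hqp : exp (-1) < q ^ (-p) := by
    rw [hq_def, ← exp_mul, exp_lt_exp]
    field_simp
    norm_num
  have hK : 0 < (c - 1) * (q - 1) := mul_pos (by linarith) (by linarith)
  set K := (c - 1) * (q - 1)
  refine IsBigO.of_bound (q ^ p * K ^ (-p)) ?_
  filter_upwards [eventually_gt_atTop 0, h.eventually_apply_add_mul_geom_sum_le hq hqp,
    (h.tendsto_mul_scale_atTop.const_mul_atTop hK).eventually_ge_atTop 1] with x hx hdecay hKx
  have hwx := h.scale_pos x
  obtain ⟨n, hn, hn'⟩ := exists_pow_le_and_rpow_neg_pow_le hq hp.le hKx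
  have hreach : x + 1 / w x * ∑ i ∈ Finset.range n, q ^ i ≤ c * x := by
    have hsum : ∑ i ∈ Finset.range n, q ^ i ≤ (c - 1) * x * w x :=
      geom_sum_le_of_pow_le hq (hn.trans_eq (by ring))
    have : 1 / w x * ∑ i ∈ Finset.range n, q ^ i ≤ (c - 1) * x := by
      rwa [one_div_mul_eq_div, div_le_iff₀ hwx]
    linarith
  rw [norm_of_nonneg (div_pos (h.pos _) (h.pos _)).le, norm_of_nonneg (by positivity)]
  calc G (c * x) / G x ≤ (q ^ (-p)) ^ n :=
        (div_le_iff₀ (h.pos x)).2 ((h.antitone hreach).trans (hdecay n))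
    _ ≤ q ^ p * (K * (x * w x)) ^ (-p) := hn'
    _ = q ^ p * K ^ (-p) * (x * w x) ^ (-p) := by
        rw [mul_rpow hK.le (by positivity), mul_assoc]

end IsGumbelTail

theorem rapid_variation_rate_general {G w : ℝ → ℝ} (h : IsGumbelTail G w) (μ : ℝ) {c : ℝ}
    (hc : 1 < c) :
    Tendsto (fun x ↦ (x * w x) ^ μ * (G (c * x) / G x)) atTop (𝓝 0) := by
  have hp : 0 < |μ| + 1 := by positivity
  have hbound : (fun x ↦ (x * w x) ^ μ * (G (c * x) / G x)) =O[atTop]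
      fun x ↦ (x * w x) ^ μ * (x * w x) ^ (-(|μ| + 1)) :=
    (isBigO_refl _ _).mul (h.isBigO_apply_mul_div hc hp)
  refine hbound.trans_tendsto ?_
  have hexponent : 0 < |μ| + 1 - μ := by linarith [le_abs_self μ]
  refine ((tendsto_rpow_neg_atTop hexponent).comp h.tendsto_mul_scale_atTop).congr' ?_
  filter_upwards [h.tendsto_mul_scale_atTop.eventually_gt_atTop 0] with x hx
  rw [Function.comp_apply, ← rpow_add hx]
  ring_nf

/-- if `H` has upper endpoint `∞` and `H ∈ MDA(Λ, w)`, then for every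
`μ ≥ 0` and `c > 1`, `(x w(x))^μ H̄(cx)/H̄(x) → 0` as `x → ∞`. -/
theorem rapid_variation_rate (H : ℝ → ℝ) (hmono : Monotone H)
    (hbot : Tendsto H atBot (𝓝 0)) (htop : Tendsto H atTop (𝓝 1))
    (hrH : ∀ x, H x < 1)
    (w : ℝ → ℝ) (hw : ∀ x, 0 < w x) (hwm : Measurable w)
    (hMDA : ∀ t : ℝ, Tendsto (fun x => (1 - H (x + t / w x)) / (1 - H x))
      atTop (𝓝 (Real.exp (-t))))
    (μ : ℝ) (hμ : 0 ≤ μ) (c : ℝ) (hc : 1 < c) :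
    Tendsto (fun x => (x * w x) ^ μ * ((1 - H (c * x)) / (1 - H x)))
      atTop (𝓝 0) := by
  exact rapid_variation_rate_general (G := fun x => 1 - H x)
    ⟨fun _ _ hxy => sub_le_sub_left (hmono hxy) 1, fun x => sub_pos.2 (hrH x), hw, hMDA⟩ μ hc
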